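/- Let A be an associative algebra over a field k of characteristic 0 and let C^•(A) = ⊕_{n≥0} Hom_k(A^{⊗n}, A). The Gerstenhaber bracket [f,g] := f ∘ g - (-1)^{(m-1)(n-1)} g ∘ f on homogeneous f ∈ Hom_k(A^{⊗m},A), g ∈ Hom_k(A^{⊗n},A) makes the shifted space C^•(A)[1] into a graded Lie algebra: the bracket respects the (shifted) grading, is graded skew-symmetric, i.e. [f,g] = -(-1)^{(m-1)(n-1)}[g,f], and satisfies the graded Jacobi identity. -/

import Mathlib

open scoped BigOperators

/-- A Hochschild `m`-cochain `f ∈ Hom_k(A^{⊗m}, A)` (given as a multilinear map)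
encoded as a function on sequences, reading its `m` arguments off the first
`m` entries of the sequence. -/
def toC (k : Type*) {A : Type*} [CommSemiring k] [AddCommMonoid A] [Module k A]
    (m : ℕ) (f : MultilinearMap k (fun _ : Fin m => A) A) : (ℕ → A) → A :=
  fun v => f (fun j => v (j : ℕ))

/-- The circle product `f ∘ g = ∑ᵢ (-1)^{(i-1)(n+1)} f ∘ᵢ g` of an `m`-cochain and an
`n`-cochain (in the sequence encoding), where `f ∘ᵢ g` substitutes `g` into the `i`-th
slot of `f`. -/
noncomputable def circC (k : Type*) {A : Type*} [Field k] [AddCommGroup A] [Module k A]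
    (m n : ℕ) (F G : (ℕ → A) → A) : (ℕ → A) → A :=
  fun v => ∑ i : Fin m, ((-1 : k) ^ ((i : ℕ) * (n + 1))) •
    F (fun j => if j < (i : ℕ) then v j
      else if j = (i : ℕ) then G (fun t => v ((i : ℕ) + t))
      else v (j + n - 1))

/-- The Gerstenhaber bracket `[f,g] = f ∘ g - (-1)^{(m-1)(n-1)} g ∘ f` of an `m`-cochain
and an `n`-cochain, in the sequence encoding. -/
noncomputable def gerstC (k : Type*) {A : Type*} [Field k] [AddCommGroup A] [Module k A]
    (m n : ℕ) (F G : (ℕ → A) → A) : (ℕ → A) → A :=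
  circC k m n F G - ((-1 : k) ^ (((m : ℤ) - 1) * ((n : ℤ) - 1))) • circC k n m G F

/-!
Partial composition `F ∘ᵢ G` satisfies the two operad axioms: nested insertions associate, and
insertions into different slots commute. Hence `(F ∘ G) ∘ H`, as a sum over the slot of `H`, splits
into the terms with `H` inside `G`, which form `F ∘ (G ∘ H)`, and those with `H` to the right or to
the left of `G`, which form the braces `F{G, H}` and `± F{H, G}`. The associator of the circle
product is therefore graded symmetric in its last two arguments, and the Jacobi sum of the
commutator bracket is a signed sum of differences of associators that this symmetry makes vanish.
-/

/-- The sequence obtained from `v` by replacing the block of `n` entries starting at `i` by the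
value of `G` on it. For `n = 0` an entry is inserted, and nothing is removed. -/
def insertAt {A : Type*} (i n : ℕ) (G : (ℕ → A) → A) (v : ℕ → A) : ℕ → A :=
  fun j => if j < i then v j else if j = i then G (fun t => v (i + t)) else v (j + n - 1)

/-- The partial composition `F ∘ᵢ G` of the operad of multilinear operations, for `G` of arity `n`,
with the slots of `F` numbered from `0`. -/
def partialComp {A : Type*} (i n : ℕ) (F G : (ℕ → A) → A) : (ℕ → A) → A :=
  fun v => F (insertAt i n G v)

section PartialComp

variable {A : Type*} {i j n p s : ℕ} {G : (ℕ → A) → A}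

theorem insertAt_of_lt (hj : j < i) (G : (ℕ → A) → A) (v : ℕ → A) :
    insertAt i n G v j = v j :=
  if_pos hj

theorem insertAt_self (i n : ℕ) (G : (ℕ → A) → A) (v : ℕ → A) :
    insertAt i n G v i = G fun t => v (i + t) := by
  simp [insertAt]

theorem insertAt_of_gt (hj : i < j) (G : (ℕ → A) → A) (v : ℕ → A) :
    insertAt i n G v j = v (j + n - 1) := by
  rw [insertAt, if_neg hj.not_gt, if_neg hj.ne']

theorem insertAt_add_left (i s p : ℕ) (H : (ℕ → A) → A) (v : ℕ → A) :
    (fun t => insertAt (i + s) p H v (i + t)) = insertAt s p H fun t => v (i + t) := by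
  funext t
  rcases lt_trichotomy t s with ht | rfl | ht
  · rw [insertAt_of_lt (by omega), insertAt_of_lt ht]
  · simp only [insertAt_self, add_assoc]
  · rw [insertAt_of_gt (by omega), insertAt_of_gt ht, show i + t + p - 1 = i + (t + p - 1) by omega]

theorem insertAt_insertAt_of_lt (hs : s < n) (G H : (ℕ → A) → A) (v : ℕ → A) :
    insertAt i n G (insertAt (i + s) p H v) = insertAt i (n + p - 1) (partialComp s p G H) v := by
  funext l
  rcases lt_trichotomy l i with hl | rfl | hl
  · rw [insertAt_of_lt hl, insertAt_of_lt hl, insertAt_of_lt (by omega)]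
  · rw [insertAt_self, insertAt_self, insertAt_add_left, partialComp]
  · rw [insertAt_of_gt hl, insertAt_of_gt hl, insertAt_of_gt (by omega),
      show l + n - 1 + p - 1 = l + (n + p - 1) - 1 by omega]

theorem insertAt_insertAt_comm (hG : DependsOn G (Set.Iio n)) (hij : i < j) (H : (ℕ → A) → A)
    (v : ℕ → A) :
    insertAt i n G (insertAt (j + n - 1) p H v) = insertAt j p H (insertAt i n G v) := by
  funext l
  rcases lt_trichotomy l i with hl | rfl | hl
  · rw [insertAt_of_lt hl, insertAt_of_lt (by omega), insertAt_of_lt (by omega), insertAt_of_lt hl]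
  · rw [insertAt_self, insertAt_of_lt hij, insertAt_self]
    exact hG fun t ht => insertAt_of_lt (by have := Set.mem_Iio.1 ht; omega) H v
  rw [insertAt_of_gt hl]
  rcases lt_trichotomy l j with hl' | rfl | hl'
  · rw [insertAt_of_lt (by omega), insertAt_of_lt hl', insertAt_of_gt hl]
  · rw [insertAt_self, insertAt_self]
    congr 1
    funext t
    rw [insertAt_of_gt (by omega), show l + n - 1 + t = l + t + n - 1 by omega]
  · rw [insertAt_of_gt (by omega), insertAt_of_gt hl', insertAt_of_gt (by omega),
      show l + n - 1 + p - 1 = l + p - 1 + n - 1 by omega]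

theorem partialComp_assoc (hs : s < n) (F G H : (ℕ → A) → A) :
    partialComp (i + s) p (partialComp i n F G) H
      = partialComp i (n + p - 1) F (partialComp s p G H) := by
  funext v
  rw [partialComp, partialComp, insertAt_insertAt_of_lt hs, partialComp]

theorem partialComp_right_comm (hG : DependsOn G (Set.Iio n)) (hij : i < j)
    (F H : (ℕ → A) → A) :
    partialComp (j + n - 1) p (partialComp i n F G) H
      = partialComp i n (partialComp j p F H) G := by
  funext v
  rw [partialComp, partialComp, insertAt_insertAt_comm hG hij, partialComp, partialComp]

theorem dependsOn_partialComp {m : ℕ} {F : (ℕ → A) → A} (hF : DependsOn F (Set.Iio m))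
    (hG : DependsOn G (Set.Iio n)) (hi : i < m) :
    DependsOn (partialComp i n F G) (Set.Iio (m + n - 1)) := by
  intro v w hvw
  simp only [Set.mem_Iio] at hvw
  refine hF fun l hl => ?_
  rw [Set.mem_Iio] at hl
  rcases lt_trichotomy l i with hli | rfl | hli
  · rw [insertAt_of_lt hli, insertAt_of_lt hli, hvw l (by omega)]
  · rw [insertAt_self, insertAt_self]
    exact hG fun t ht => hvw _ (by rw [Set.mem_Iio] at ht; omega)
  · rw [insertAt_of_gt hli, insertAt_of_gt hli, hvw _ (by omega)]

end PartialComp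

/-- The Koszul sign `(-1)^{(m-1)(n-1)}` of cochains of shifted degrees `m - 1` and `n - 1`; the
exponent has the same parity as `(m-1)(n-1)` and involves no truncated subtraction. -/
def koszulSign (k : Type*) [Ring k] (m n : ℕ) : k := (-1) ^ ((m + 1) * (n + 1))

theorem koszulSign_comm (k : Type*) [Ring k] (m n : ℕ) : koszulSign k m n = koszulSign k n m := by
  rw [koszulSign, koszulSign, mul_comm]

theorem koszulSign_eq_or (k : Type*) [Ring k] (m n : ℕ) :
    koszulSign k m n = 1 ∨ koszulSign k m n = -1 :=
  neg_one_pow_eq_or k _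

theorem koszulSign_add_sub_one (k : Type*) [Ring k] (m : ℕ) {n p : ℕ} (h : 0 < n + p) :
    koszulSign k m (n + p - 1) = koszulSign k m n * koszulSign k m p := by
  rw [koszulSign, koszulSign, koszulSign, ← pow_add]
  refine neg_one_pow_congr ?_
  grind

theorem neg_one_zpow_eq_koszulSign (k : Type*) [Field k] (m n : ℕ) :
    (-1 : k) ^ (((m : ℤ) - 1) * ((n : ℤ) - 1)) = koszulSign k m n := by
  rw [koszulSign, ← zpow_natCast]
  push_cast
  rw [show ((m : ℤ) + 1) * (n + 1) = (m - 1) * (n - 1) + 2 * (m + n) by ring,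
    zpow_add₀ (by simp), zpow_mul _ 2]
  simp

section CircleProduct

variable {k A : Type*} [Field k] [AddCommGroup A] [Module k A]

theorem circC_eq_sum (m n : ℕ) (F G : (ℕ → A) → A) :
    circC k m n F G = ∑ i ∈ Finset.range m, (-1 : k) ^ (i * (n + 1)) • partialComp i n F G := by
  rw [Finset.sum_range]
  funext v
  simp only [Finset.sum_apply, Pi.smul_apply]
  rfl

theorem dependsOn_toC {m : ℕ} (f : MultilinearMap k (fun _ : Fin m => A) A) :
    DependsOn (toC k m f) (Set.Iio m) :=
  fun _ _ hvw => congrArg f (funext fun j => hvw j j.2)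

theorem dependsOn_circC {m n : ℕ} {F G : (ℕ → A) → A}
    (hF : DependsOn F (Set.Iio m)) (hG : DependsOn G (Set.Iio n)) :
    DependsOn (circC k m n F G) (Set.Iio (m + n - 1)) := by
  intro v w hvw
  simp only [circC_eq_sum, Finset.sum_apply, Pi.smul_apply]
  refine Finset.sum_congr rfl fun i hi => ?_
  rw [dependsOn_partialComp hF hG (Finset.mem_range.1 hi) hvw]

theorem isLinearMap_partialComp_left (i n : ℕ) (G : (ℕ → A) → A) :
    IsLinearMap k fun F => partialComp i n F G :=
  ⟨fun _ _ => rfl, fun _ _ => rfl⟩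

theorem isLinearMap_partialComp_toC {m i : ℕ} (hi : i < m) (n : ℕ)
    (f : MultilinearMap k (fun _ : Fin m => A) A) :
    IsLinearMap k (partialComp i n (toC k m f)) := by
  have eval_eq (G : (ℕ → A) → A) (v : ℕ → A) : partialComp i n (toC k m f) G v
      = f.toLinearMap (fun j => insertAt i n 0 v j) ⟨i, hi⟩ (G fun t => v (i + t)) := by
    rw [partialComp, toC, MultilinearMap.toLinearMap_apply]
    congr 1
    funext j
    by_cases hj : j = ⟨i, hi⟩
    · subst hj
      rw [Function.update_self, insertAt_self]
    · have hj' : (j : ℕ) ≠ i := fun h => hj (Fin.ext h)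
      simp only [Function.update_of_ne hj, insertAt, if_neg hj']
  constructor <;> intros <;> funext v <;>
    simp only [eval_eq, Pi.add_apply, Pi.smul_apply, map_add, map_smul]

theorem isLinearMap_circC_left (m n : ℕ) (G : (ℕ → A) → A) :
    IsLinearMap k fun F => circC k m n F G := by
  constructor <;> intros <;> simp only [circC_eq_sum, Finset.smul_sum, ← Finset.sum_add_distrib] <;>
    refine Finset.sum_congr rfl fun i _ => ?_
  · rw [(isLinearMap_partialComp_left (k := k) i n G).map_add, smul_add]
  · rw [(isLinearMap_partialComp_left i n G).map_smul, smul_comm]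

theorem isLinearMap_circC_toC {m : ℕ} (n : ℕ) (f : MultilinearMap k (fun _ : Fin m => A) A) :
    IsLinearMap k (circC k m n (toC k m f)) := by
  constructor <;> intros <;> simp only [circC_eq_sum, Finset.smul_sum, ← Finset.sum_add_distrib] <;>
    refine Finset.sum_congr rfl fun i hi => ?_
  · rw [(isLinearMap_partialComp_toC (Finset.mem_range.1 hi) n f).map_add, smul_add]
  · rw [(isLinearMap_partialComp_toC (Finset.mem_range.1 hi) n f).map_smul, smul_comm]

theorem circC_zero_left (n : ℕ) (F G : (ℕ → A) → A) : circC k 0 n F G = 0 := by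
  rw [circC_eq_sum, Finset.sum_range_zero]

theorem circC_circC_eq_sum (l m n p : ℕ) (F G H : (ℕ → A) → A) :
    circC k l p (circC k m n F G) H
      = ∑ i ∈ Finset.range m, ∑ j ∈ Finset.range l,
          ((-1 : k) ^ (i * (n + 1)) * (-1) ^ (j * (p + 1))) •
            partialComp j p (partialComp i n F G) H := by
  rw [circC_eq_sum m, ← IsLinearMap.mk'_apply (isLinearMap_circC_left (k := k) l p H), map_sum]
  refine Finset.sum_congr rfl fun i _ => ?_
  rw [map_smul, IsLinearMap.mk'_apply, circC_eq_sum, Finset.smul_sum]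
  simp only [smul_smul]

theorem circC_toC_circC_eq_sum {m : ℕ} (n p : ℕ) (f : MultilinearMap k (fun _ : Fin m => A) A)
    (G H : (ℕ → A) → A) :
    circC k m (n + p - 1) (toC k m f) (circC k n p G H)
      = ∑ i ∈ Finset.range m, ∑ j ∈ Finset.Ico i (i + n),
          ((-1 : k) ^ (i * (n + 1)) * (-1) ^ (j * (p + 1))) •
            partialComp j p (partialComp i n (toC k m f) G) H := by
  rw [circC_eq_sum m]
  refine Finset.sum_congr rfl fun i hi => ?_
  have hlin := isLinearMap_partialComp_toC (Finset.mem_range.1 hi) (n + p - 1) f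
  rw [Finset.sum_Ico_eq_sum_range, Nat.add_sub_cancel_left, circC_eq_sum, ← hlin.mk'_apply, map_sum,
    Finset.smul_sum]
  refine Finset.sum_congr rfl fun s hs => ?_
  rw [Finset.mem_range] at hs
  have hsign : (-1 : k) ^ (i * (n + p - 1 + 1)) * (-1) ^ (s * (p + 1))
      = (-1) ^ (i * (n + 1)) * (-1) ^ ((i + s) * (p + 1)) := by
    rw [← pow_add, ← pow_add, show n + p - 1 + 1 = n + p by omega]
    exact neg_one_pow_congr (by grind)
  rw [map_smul, hlin.mk'_apply, smul_smul, hsign, partialComp_assoc hs]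

end CircleProduct

section PreLie

variable {k A : Type*} [Field k] [AddCommGroup A] [Module k A]

/-- The brace `F{G, H}` of cochains of arities `m`, `n`, `p`: the signed sum of all simultaneous
insertions of `G` and `H` into `F` with `G` to the left of `H`. The index `j` numbers the slot of
`H` after the insertion of `G`, which occupies the slots `i, …, i + n - 1`. -/
noncomputable def brace (k : Type*) {A : Type*} [Field k] [AddCommGroup A] [Module k A]
    (m n p : ℕ) (F G H : (ℕ → A) → A) : (ℕ → A) → A :=
  ∑ i ∈ Finset.range m, ∑ j ∈ Finset.Ico (i + n) (m + n - 1),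
    ((-1 : k) ^ (i * (n + 1)) * (-1) ^ (j * (p + 1))) • partialComp j p (partialComp i n F G) H

/-- The associator `(F ∘ G) ∘ H - F ∘ (G ∘ H)` of the circle product, for cochains of arities `m`,
`n`, `p`. -/
noncomputable def circAssociator (k : Type*) {A : Type*} [Field k] [AddCommGroup A] [Module k A]
    (m n p : ℕ) (F G H : (ℕ → A) → A) : (ℕ → A) → A :=
  circC k (m + n - 1) p (circC k m n F G) H - circC k m (n + p - 1) F (circC k n p G H)

theorem koszulSign_smul_brace (m n : ℕ) {p : ℕ} (F G : (ℕ → A) → A) {H : (ℕ → A) → A}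
    (hH : DependsOn H (Set.Iio p)) :
    koszulSign k n p • brace k m p n F H G
      = ∑ i ∈ Finset.range m, ∑ j ∈ Finset.range i,
          ((-1 : k) ^ (i * (n + 1)) * (-1) ^ (j * (p + 1))) •
            partialComp j p (partialComp i n F G) H := by
  rw [Finset.sum_comm' (t' := Finset.range m) (s' := fun j => Finset.Ico (j + 1) m)
    (by simp only [Finset.mem_range, Finset.mem_Ico]; omega), brace, Finset.smul_sum]
  refine Finset.sum_congr rfl fun j hj => ?_
  rw [Finset.mem_range] at hj
  rw [Finset.smul_sum, Finset.sum_Ico_eq_sum_range, Finset.sum_Ico_eq_sum_range,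
    show m + p - 1 - (j + p) = m - (j + 1) by omega]
  refine Finset.sum_congr rfl fun t _ => ?_
  have hsign : koszulSign k n p * ((-1) ^ (j * (p + 1)) * (-1) ^ ((j + p + t) * (n + 1)))
      = (-1) ^ ((j + 1 + t) * (n + 1)) * (-1) ^ (j * (p + 1)) := by
    rw [koszulSign, ← pow_add, ← pow_add, ← pow_add]
    exact neg_one_pow_congr (by grind)
  rw [smul_smul, hsign, ← partialComp_right_comm hH (show j < j + 1 + t by omega),
    show j + 1 + t + p - 1 = j + p + t by omega]

theorem circAssociator_toC {m p : ℕ} (n : ℕ) (f : MultilinearMap k (fun _ : Fin m => A) A)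
    (G : (ℕ → A) → A) {H : (ℕ → A) → A} (hH : DependsOn H (Set.Iio p)) :
    circAssociator k m n p (toC k m f) G H
      = brace k m n p (toC k m f) G H + koszulSign k n p • brace k m p n (toC k m f) H G := by
  rw [circAssociator, sub_eq_iff_eq_add, koszulSign_smul_brace m n _ G hH, brace,
    circC_toC_circC_eq_sum, circC_circC_eq_sum, ← Finset.sum_add_distrib, ← Finset.sum_add_distrib]
  refine Finset.sum_congr rfl fun i hi => ?_
  rw [Finset.mem_range] at hi
  rw [← Finset.sum_range_add_sum_Ico _ (show i ≤ m + n - 1 by omega),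
    ← Finset.sum_Ico_consecutive _ (Nat.le_add_right i n) (show i + n ≤ m + n - 1 by omega)]
  abel

theorem circAssociator_toC_symm {m n p : ℕ} (f : MultilinearMap k (fun _ : Fin m => A) A)
    {G H : (ℕ → A) → A} (hG : DependsOn G (Set.Iio n)) (hH : DependsOn H (Set.Iio p)) :
    circAssociator k m n p (toC k m f) G H
      = koszulSign k n p • circAssociator k m p n (toC k m f) H G := by
  rw [circAssociator_toC n f G hH, circAssociator_toC p f H hG, koszulSign_comm k p n]
  rcases koszulSign_eq_or k n p with h | h <;> rw [h] <;> module

end PreLie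

section Bracket

variable {k A : Type*} [Field k] [AddCommGroup A] [Module k A]

theorem gerstC_eq (m n : ℕ) (F G : (ℕ → A) → A) :
    gerstC k m n F G = circC k m n F G - koszulSign k m n • circC k n m G F := by
  rw [gerstC, neg_one_zpow_eq_koszulSign]

theorem dependsOn_gerstC {m n : ℕ} {F G : (ℕ → A) → A}
    (hF : DependsOn F (Set.Iio m)) (hG : DependsOn G (Set.Iio n)) :
    DependsOn (gerstC k m n F G) (Set.Iio (m + n - 1)) := by
  intro v w hvw
  rw [gerstC, Pi.sub_apply, Pi.sub_apply, Pi.smul_apply, Pi.smul_apply, dependsOn_circC hF hG hvw,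
    dependsOn_circC hG hF (by rwa [add_comm n m])]

theorem gerstC_skew (m n : ℕ) (F G : (ℕ → A) → A) :
    gerstC k m n F G = -(koszulSign k m n • gerstC k n m G F) := by
  rw [gerstC_eq, gerstC_eq, koszulSign_comm k n m]
  rcases koszulSign_eq_or k m n with h | h <;> rw [h] <;> module

theorem koszulSign_smul_circC_gerstC (m n p : ℕ) (F G H : (ℕ → A) → A) :
    koszulSign k m (n + p - 1) • circC k (n + p - 1) m (gerstC k n p G H) F
      = (koszulSign k m n * koszulSign k m p) •
        circC k (n + p - 1) m (gerstC k n p G H) F := by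
  rcases Nat.eq_zero_or_pos (n + p) with h | h
  · simp only [h, Nat.zero_sub, circC_zero_left, smul_zero]
  · rw [koszulSign_add_sub_one k m h]

theorem gerstC_toC_gerstC {m : ℕ} (n p : ℕ) (f : MultilinearMap k (fun _ : Fin m => A) A)
    (G H : (ℕ → A) → A) :
    gerstC k m (n + p - 1) (toC k m f) (gerstC k n p G H)
      = circC k m (n + p - 1) (toC k m f) (circC k n p G H)
        - koszulSign k n p • circC k m (n + p - 1) (toC k m f) (circC k p n H G)
        - (koszulSign k m n * koszulSign k m p) •
          (circC k (n + p - 1) m (circC k n p G H) (toC k m f)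
            - koszulSign k n p • circC k (n + p - 1) m (circC k p n H G) (toC k m f)) := by
  have hlin := isLinearMap_circC_toC (n + p - 1) f
  have hlin' := isLinearMap_circC_left (k := k) (n + p - 1) m (toC k m f)
  rw [gerstC_eq, koszulSign_smul_circC_gerstC, gerstC_eq, hlin.map_sub, hlin.map_smul,
    hlin'.map_sub, hlin'.map_smul]

theorem gerstC_jacobi_sum_eq {m n p : ℕ} (f : MultilinearMap k (fun _ : Fin m => A) A)
    (g : MultilinearMap k (fun _ : Fin n => A) A) (h : MultilinearMap k (fun _ : Fin p => A) A) :
    koszulSign k m p •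
          gerstC k m (n + p - 1) (toC k m f) (gerstC k n p (toC k n g) (toC k p h))
        + koszulSign k n m •
          gerstC k n (p + m - 1) (toC k n g) (gerstC k p m (toC k p h) (toC k m f))
        + koszulSign k p n •
          gerstC k p (m + n - 1) (toC k p h) (gerstC k m n (toC k m f) (toC k n g))
      = koszulSign k m p •
          (koszulSign k n p • circAssociator k m p n (toC k m f) (toC k p h) (toC k n g)
            - circAssociator k m n p (toC k m f) (toC k n g) (toC k p h))
        + koszulSign k n m •
          (koszulSign k p m • circAssociator k n m p (toC k n g) (toC k m f) (toC k p h)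
            - circAssociator k n p m (toC k n g) (toC k p h) (toC k m f))
        + koszulSign k p n •
          (koszulSign k m n • circAssociator k p n m (toC k p h) (toC k n g) (toC k m f)
            - circAssociator k p m n (toC k p h) (toC k m f) (toC k n g)) := by
  rw [gerstC_toC_gerstC, gerstC_toC_gerstC, gerstC_toC_gerstC]
  simp only [circAssociator, koszulSign_comm k n m, koszulSign_comm k p m,
    koszulSign_comm k p n, add_comm n m, add_comm p m, add_comm p n]
  rcases koszulSign_eq_or k m n with hmn | hmn <;>
  rcases koszulSign_eq_or k n p with hnp | hnp <;>
  rcases koszulSign_eq_or k m p with hmp | hmp <;>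
  rw [hmn, hnp, hmp] <;> module

theorem gerstC_jacobi {m n p : ℕ} (f : MultilinearMap k (fun _ : Fin m => A) A)
    (g : MultilinearMap k (fun _ : Fin n => A) A) (h : MultilinearMap k (fun _ : Fin p => A) A) :
    koszulSign k m p •
          gerstC k m (n + p - 1) (toC k m f) (gerstC k n p (toC k n g) (toC k p h))
        + koszulSign k n m •
          gerstC k n (p + m - 1) (toC k n g) (gerstC k p m (toC k p h) (toC k m f))
        + koszulSign k p n •
          gerstC k p (m + n - 1) (toC k p h) (gerstC k m n (toC k m f) (toC k n g))
      = 0 := by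
  have hf := dependsOn_toC f
  have hg := dependsOn_toC g
  have hh := dependsOn_toC h
  rw [gerstC_jacobi_sum_eq, circAssociator_toC_symm f hg hh, circAssociator_toC_symm g hh hf,
    circAssociator_toC_symm h hf hg]
  simp only [sub_self, smul_zero, add_zero]

end Bracket

theorem stmt_9_general {k A : Type*} [Field k] [AddCommGroup A] [Module k A] :
    (∀ (m n : ℕ) (f : MultilinearMap k (fun _ : Fin m => A) A)
        (g : MultilinearMap k (fun _ : Fin n => A) A) (v w : ℕ → A),
      (∀ j, j < m + n - 1 → v j = w j) →
      gerstC k m n (toC k m f) (toC k n g) v = gerstC k m n (toC k m f) (toC k n g) w) ∧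
    (∀ (m n : ℕ) (f : MultilinearMap k (fun _ : Fin m => A) A)
        (g : MultilinearMap k (fun _ : Fin n => A) A),
      gerstC k m n (toC k m f) (toC k n g)
        = - (((-1 : k) ^ (((m : ℤ) - 1) * ((n : ℤ) - 1))) •
            gerstC k n m (toC k n g) (toC k m f))) ∧
    (∀ (m n p : ℕ) (f : MultilinearMap k (fun _ : Fin m => A) A)
        (g : MultilinearMap k (fun _ : Fin n => A) A)
        (h : MultilinearMap k (fun _ : Fin p => A) A),
      ((-1 : k) ^ (((m : ℤ) - 1) * ((p : ℤ) - 1))) •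
          gerstC k m (n + p - 1) (toC k m f) (gerstC k n p (toC k n g) (toC k p h))
        + ((-1 : k) ^ (((n : ℤ) - 1) * ((m : ℤ) - 1))) •
          gerstC k n (p + m - 1) (toC k n g) (gerstC k p m (toC k p h) (toC k m f))
        + ((-1 : k) ^ (((p : ℤ) - 1) * ((n : ℤ) - 1))) •
          gerstC k p (m + n - 1) (toC k p h) (gerstC k m n (toC k m f) (toC k n g))
        = 0) := by
  simp only [neg_one_zpow_eq_koszulSign]
  exact ⟨fun _ _ f g _ _ hvw => dependsOn_gerstC (dependsOn_toC f) (dependsOn_toC g) hvw,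
    fun m n _ _ => gerstC_skew m n _ _, fun _ _ _ => gerstC_jacobi⟩

/-- The Gerstenhaber bracket makes the (shifted) Hochschild cochain complex
`C^•(A)[1]` into a graded Lie algebra: it respects the grading (the bracket of an
`m`-cochain and an `n`-cochain is an `(m+n-1)`-cochain), is graded skew-symmetric, and
satisfies the graded Jacobi identity (with respect to the shifted degrees `m-1`, `n-1`,
`p-1`). -/
theorem stmt_9 {k A : Type*} [Field k] [CharZero k] [Ring A] [Algebra k A] :
    (∀ (m n : ℕ) (f : MultilinearMap k (fun _ : Fin m => A) A)
        (g : MultilinearMap k (fun _ : Fin n => A) A) (v w : ℕ → A),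
      (∀ j, j < m + n - 1 → v j = w j) →
      gerstC k m n (toC k m f) (toC k n g) v = gerstC k m n (toC k m f) (toC k n g) w) ∧
    (∀ (m n : ℕ) (f : MultilinearMap k (fun _ : Fin m => A) A)
        (g : MultilinearMap k (fun _ : Fin n => A) A),
      gerstC k m n (toC k m f) (toC k n g)
        = - (((-1 : k) ^ (((m : ℤ) - 1) * ((n : ℤ) - 1))) •
            gerstC k n m (toC k n g) (toC k m f))) ∧
    (∀ (m n p : ℕ) (f : MultilinearMap k (fun _ : Fin m => A) A)
        (g : MultilinearMap k (fun _ : Fin n => A) A)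
        (h : MultilinearMap k (fun _ : Fin p => A) A),
      ((-1 : k) ^ (((m : ℤ) - 1) * ((p : ℤ) - 1))) •
          gerstC k m (n + p - 1) (toC k m f) (gerstC k n p (toC k n g) (toC k p h))
        + ((-1 : k) ^ (((n : ℤ) - 1) * ((m : ℤ) - 1))) •
          gerstC k n (p + m - 1) (toC k n g) (gerstC k p m (toC k p h) (toC k m f))
        + ((-1 : k) ^ (((p : ℤ) - 1) * ((n : ℤ) - 1))) •
          gerstC k p (m + n - 1) (toC k p h) (gerstC k m n (toC k m f) (toC k n g))
        = 0) :=
  stmt_9_general
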